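/- Let d ≥ 2 and κ > 0. There exists exactly one differentiable function h : (−1,1) → ℝ satisfying ∫_{−1}^{1} (1−r²)^{(d−1)/2} h(r)² dr < ∞ and ∫_{−1}^{1} (1−r²)^{(d+1)/2} h'(r)² dr < ∞, such that for every differentiable ℓ : (−1,1) → ℝ with ∫_{−1}^{1}(1−r²)^{(d−1)/2}ℓ² dr < ∞ and ∫_{−1}^{1}(1−r²)^{(d+1)/2}(ℓ')² dr < ∞, the variational identity holds: ∫_{−1}^{1} (1−r²)^{(d+1)/2} e^{κr²/2} h'(r) ℓ'(r) dr + ∫_{−1}^{1} (1−r²)^{(d−1)/2} (κr² + d−1) e^{κr²/2} h(r) ℓ(r) dr = − ∫_{−1}^{1} r (1−r²)^{(d−1)/2} e^{κr²/2} ℓ(r) dr. (This h is the profile of the generalized collision invariant, the weak solution of the ODE −(1−r²)^{(d−1)/2}e^{κr²/2}(κr²+d−1)h + d/dr[(1−r²)^{(d+1)/2}e^{κr²/2}h'] = r(1−r²)^{(d−1)/2}e^{κr²/2}.) -/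

import Mathlib

/-!
Put `A² = (1-r²)^{(d-1)/2}(κr²+d-1)e^{κr²/2}` and `B² = (1-r²)^{(d+1)/2}e^{κr²/2}`. The factors
`κr²+d-1` and `e^{κr²/2}` are bounded above and below on `(-1,1)`, so `ℓ` lies in the weighted space
exactly when `Aℓ` and `Bℓ'` are in `L²(-1,1)`, and the variational identity says that
`(Ah, Bh')` and `(Z, 0)`, with `Z = -rA/(κr²+d-1)`, have the same `L² × L²` inner product with every
`(Aℓ, Bℓ')` (`isGCIProfile_iff`). Uniqueness follows by testing the difference of two solutions
against itself (`solution_unique`).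

For existence, a generalized solution `(a, b)` is the orthogonal projection of `(Z, 0)` onto the
closure of the space of pairs `(Aℓ, Bℓ')` (`exists_weak`). It remains to see that it comes from a
differentiable function. Testing against primitives of compactly supported functions gives
`B b = ∫_r^1 A (Z - a)` a.e. (`flux_eq`), so `b / B` agrees a.e. with a continuous function on
`(-1,1)`. Passing the fundamental theorem of calculus to the limit along a sequence of pairs
converging to `(a, b)` shows that `a / A` is a.e. a primitive of `b / B` (`exists_primitive`).
Hence `a / A` has a `C¹` representative, whose derivative is `b / B` a.e. (`exists_solution`).
-/

open MeasureTheory Set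

/-- `IsGCIProfile d κ h` says that `h` is differentiable on `(−1,1)`, belongs to the weighted
space `𝓗_{(d−1)/2,(d+1)/2}`, and satisfies the variational (weak) formulation of the GCI ODE
`−(1−r²)^{(d−1)/2}e^{κr²/2}(κr²+d−1)h + d/dr[(1−r²)^{(d+1)/2}e^{κr²/2}h'] =
r(1−r²)^{(d−1)/2}e^{κr²/2}` against every test function `ℓ` in the same space. -/
def IsGCIProfile (d : ℕ) (κ : ℝ) (h : ℝ → ℝ) : Prop :=
  (∀ r ∈ Ioo (-1 : ℝ) 1, DifferentiableAt ℝ h r) ∧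
  IntegrableOn (fun r : ℝ => (1 - r ^ 2) ^ (((d : ℝ) - 1) / 2) * h r ^ 2) (Ioo (-1 : ℝ) 1) ∧
  IntegrableOn (fun r : ℝ => (1 - r ^ 2) ^ (((d : ℝ) + 1) / 2) * deriv h r ^ 2) (Ioo (-1 : ℝ) 1) ∧
  ∀ ℓ : ℝ → ℝ,
    (∀ r ∈ Ioo (-1 : ℝ) 1, DifferentiableAt ℝ ℓ r) →
    IntegrableOn (fun r : ℝ => (1 - r ^ 2) ^ (((d : ℝ) - 1) / 2) * ℓ r ^ 2) (Ioo (-1 : ℝ) 1) →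
    IntegrableOn (fun r : ℝ => (1 - r ^ 2) ^ (((d : ℝ) + 1) / 2) * deriv ℓ r ^ 2)
      (Ioo (-1 : ℝ) 1) →
    (∫ r in Ioo (-1 : ℝ) 1,
        (1 - r ^ 2) ^ (((d : ℝ) + 1) / 2) * Real.exp (κ * r ^ 2 / 2) * deriv h r * deriv ℓ r)
      + (∫ r in Ioo (-1 : ℝ) 1,
          (1 - r ^ 2) ^ (((d : ℝ) - 1) / 2) * (κ * r ^ 2 + ((d : ℝ) - 1)) *
            Real.exp (κ * r ^ 2 / 2) * h r * ℓ r)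
      = - ∫ r in Ioo (-1 : ℝ) 1,
          r * (1 - r ^ 2) ^ (((d : ℝ) - 1) / 2) * Real.exp (κ * r ^ 2 / 2) * ℓ r

noncomputable section
open Filter Topology

/-! ### Functions on the interval -/

/-- Lebesgue measure on `(-1,1)`. -/
abbrev intervalMeasure : Measure ℝ := volume.restrict (Ioo (-1 : ℝ) 1)

/-- `ℓ` is differentiable on `(-1,1)`, with `Aℓ` and `Bℓ'` square integrable there. Nothing is
required of `ℓ` outside `(-1,1)`. -/
structure FiniteEnergy (A B ℓ : ℝ → ℝ) : Prop where
  diff : ∀ r ∈ Ioo (-1 : ℝ) 1, DifferentiableAt ℝ ℓ r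
  memA : MemLp (fun r => A r * ℓ r) 2 intervalMeasure
  memB : MemLp (fun r => B r * deriv ℓ r) 2 intervalMeasure

lemma Continuous.memLp_interval {f : ℝ → ℝ} (hf : Continuous f) (p : ENNReal) :
    MemLp f p intervalMeasure := by
  obtain ⟨C, hC⟩ := isCompact_Icc.exists_bound_of_continuousOn
    (hf.continuousOn (s := Icc (-1 : ℝ) 1))
  refine MemLp.of_bound hf.aestronglyMeasurable C ?_
  filter_upwards [ae_restrict_mem measurableSet_Ioo] with r hr
  exact hC r (Ioo_subset_Icc_self hr)

lemma integrable_interval_iff {f : ℝ → ℝ} :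
    Integrable f intervalMeasure ↔ IntervalIntegrable f volume (-1) 1 := by
  rw [intervalIntegrable_iff_integrableOn_Ioo_of_le (by norm_num)]
  rfl

lemma integral_interval (f : ℝ → ℝ) :
    ∫ r, f r ∂intervalMeasure = ∫ r in (-1 : ℝ)..1, f r := by
  rw [intervalIntegral.integral_of_le (by norm_num), integral_Ioc_eq_integral_Ioo]

/-- Integration by parts against a function `f` that is merely integrable: its primitive is
absolutely continuous. -/
lemma integral_mul_primitive {f ψ : ℝ → ℝ} (hf : Integrable f intervalMeasure)
    (hψ : Continuous ψ) :
    ∫ r, f r * (∫ s in (-1 : ℝ)..r, ψ s) ∂intervalMeasure =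
      ∫ s, (∫ t in s..1, f t) * ψ s ∂intervalMeasure := by
  have hf' := integrable_interval_iff.1 hf
  have hψ' : IntervalIntegrable ψ volume (-1) 1 := hψ.intervalIntegrable _ _
  have hF := hf'.absolutelyContinuousOnInterval_intervalIntegral (c := 1) (by simp)
  have hΨ := hψ'.absolutelyContinuousOnInterval_intervalIntegral (c := -1) (by simp)
  have key := hΨ.integral_mul_deriv_eq_deriv_mul hF
  rw [integral_interval, integral_interval]
  have h1 : ∫ x in (-1 : ℝ)..1, (∫ v in (-1 : ℝ)..x, ψ v) * deriv (fun x => ∫ v in (1 : ℝ)..x, f v) x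
      = ∫ r in (-1 : ℝ)..1, f r * (∫ s in (-1 : ℝ)..r, ψ s) := by
    apply intervalIntegral.integral_congr_ae
    filter_upwards [hf'.ae_hasDerivAt_integral] with x hx hx'
    rw [(hx (uIoc_subset_uIcc hx') 1 (by simp)).deriv, mul_comm]
  have h2 : ∫ x in (-1 : ℝ)..1, deriv (fun x => ∫ v in (-1 : ℝ)..x, ψ v) x * (∫ v in (1 : ℝ)..x, f v)
      = - ∫ s in (-1 : ℝ)..1, (∫ t in s..1, f t) * ψ s := by
    rw [← intervalIntegral.integral_neg]
    apply intervalIntegral.integral_congr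
    intro x _
    simp only
    rw [hψ.deriv_integral, intervalIntegral.integral_symm x 1]
    ring
  rw [h1, h2] at key
  simpa using key

/-! ### The generalized solution -/

/-- The space of pairs `(Aℓ, Bℓ')`, for `ℓ` of finite energy, in `L² × L²` with its Hilbert
norm. -/
def energySubspace (A B : ℝ → ℝ) :
    Submodule ℝ (WithLp 2 (Lp ℝ 2 intervalMeasure × Lp ℝ 2 intervalMeasure)) where
  carrier := {x | ∃ ℓ, FiniteEnergy A B ℓ ∧ x.fst =ᵐ[intervalMeasure] (fun r => A r * ℓ r) ∧
    x.snd =ᵐ[intervalMeasure] (fun r => B r * deriv ℓ r)}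
  zero_mem' := by
    refine ⟨0, ⟨fun r _ => by simp, by simp, by simp⟩, ?_, ?_⟩
    · filter_upwards [Lp.coeFn_zero ℝ 2 intervalMeasure] with r h
      simpa using h
    · filter_upwards [Lp.coeFn_zero ℝ 2 intervalMeasure] with r h
      simpa using h
  add_mem' := by
    rintro x y ⟨ℓ, hℓ, hx1, hx2⟩ ⟨m, hm, hy1, hy2⟩
    have hd : (fun r => B r * deriv ℓ r + B r * deriv m r) =ᵐ[intervalMeasure]
        fun r => B r * deriv (ℓ + m) r := by
      filter_upwards [ae_restrict_mem measurableSet_Ioo] with r hr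
      rw [deriv_add (hℓ.diff r hr) (hm.diff r hr)]; ring
    refine ⟨ℓ + m, ⟨fun r hr => (hℓ.diff r hr).add (hm.diff r hr), ?_, ?_⟩, ?_, ?_⟩
    · exact (hℓ.memA.add hm.memA).ae_eq (.of_forall fun r => by simp [mul_add])
    · exact (hℓ.memB.add hm.memB).ae_eq hd
    · filter_upwards [Lp.coeFn_add x.fst y.fst, hx1, hy1] with r h h1 h2
      exact h.trans (by simp [h1, h2, mul_add])
    · filter_upwards [Lp.coeFn_add x.snd y.snd, hx2, hy2, hd] with r h h1 h2 h3
      exact h.trans (by simp [h1, h2, ← h3])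
  smul_mem' := by
    rintro c x ⟨ℓ, hℓ, hx1, hx2⟩
    have hd : (fun r => c * (B r * deriv ℓ r)) =ᵐ[intervalMeasure]
        fun r => B r * deriv (c • ℓ) r := by
      filter_upwards [ae_restrict_mem measurableSet_Ioo] with r hr
      rw [deriv_const_smul c (hℓ.diff r hr)]; simp; ring
    refine ⟨c • ℓ, ⟨fun r hr => (hℓ.diff r hr).const_smul c, ?_, ?_⟩, ?_, ?_⟩
    · simpa [mul_left_comm] using hℓ.memA.const_mul c
    · exact (hℓ.memB.const_mul c).ae_eq hd
    · filter_upwards [Lp.coeFn_smul c x.fst, hx1] with r h h1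
      simp [h, h1, mul_left_comm]
    · filter_upwards [Lp.coeFn_smul c x.snd, hx2, hd] with r h h1 h3
      rw [← h3]
      simp [h, h1]

lemma inner_eq_integral (f g : Lp ℝ 2 intervalMeasure) {u v : ℝ → ℝ}
    (hu : f =ᵐ[intervalMeasure] u) (hv : g =ᵐ[intervalMeasure] v) :
    inner ℝ f g = ∫ r, u r * v r ∂intervalMeasure := by
  rw [L2.inner_def]
  apply integral_congr_ae
  filter_upwards [hu, hv] with r h1 h2
  simp [h1, h2, mul_comm]

lemma integrable_mul_of_memLp {f g : ℝ → ℝ} (hf : MemLp f 2 intervalMeasure)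
    (hg : MemLp g 2 intervalMeasure) : Integrable (fun r => f r * g r) intervalMeasure :=
  hf.integrable_mul hg

/-- The projection of `(Z, 0)` onto the closed energy space satisfies the variational identity. -/
lemma exists_weak (A B Z : ℝ → ℝ) (hZ : MemLp Z 2 intervalMeasure) :
    ∃ x ∈ (energySubspace A B).topologicalClosure,
      ∀ ℓ, FiniteEnergy A B ℓ →
        (∫ r, x.snd r * (B r * deriv ℓ r) ∂intervalMeasure) +
          (∫ r, x.fst r * (A r * ℓ r) ∂intervalMeasure) =
            ∫ r, Z r * (A r * ℓ r) ∂intervalMeasure := by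
  set K := (energySubspace A B).topologicalClosure
  have : CompleteSpace K := (energySubspace A B).isClosed_topologicalClosure.completeSpace_coe
  let z : WithLp 2 (Lp ℝ 2 intervalMeasure × Lp ℝ 2 intervalMeasure) := WithLp.toLp 2 (hZ.toLp, 0)
  refine ⟨K.starProjection z, Submodule.starProjection_apply_mem _ _, fun ℓ hℓ => ?_⟩
  let y : WithLp 2 (Lp ℝ 2 intervalMeasure × Lp ℝ 2 intervalMeasure) :=
    WithLp.toLp 2 (hℓ.memA.toLp, hℓ.memB.toLp)
  have hy : y ∈ K := (energySubspace A B).le_topologicalClosure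
    ⟨ℓ, hℓ, hℓ.memA.coeFn_toLp, hℓ.memB.coeFn_toLp⟩
  have := Submodule.starProjection_inner_eq_zero (K := K) z y hy
  rw [inner_sub_left, WithLp.prod_inner_apply, WithLp.prod_inner_apply,
    inner_eq_integral _ _ hZ.coeFn_toLp hℓ.memA.coeFn_toLp,
    inner_eq_integral _ _ (Lp.coeFn_zero ℝ 2 intervalMeasure) hℓ.memB.coeFn_toLp,
    inner_eq_integral _ _ (ae_eq_refl _) hℓ.memA.coeFn_toLp,
    inner_eq_integral _ _ (ae_eq_refl _) hℓ.memB.coeFn_toLp] at this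
  simp only [Pi.zero_apply, zero_mul, integral_zero] at this
  change _ - ((∫ r, (K.starProjection z).fst r * (A r * ℓ r) ∂intervalMeasure) +
    (∫ r, (K.starProjection z).snd r * (B r * deriv ℓ r) ∂intervalMeasure)) = 0 at this
  linarith

/-! ### Regularity -/

/-- The flux of a generalized solution is a primitive. No constant of integration appears, because
the test functions need not vanish at the right endpoint. -/
lemma flux_eq {A B Z a b : ℝ → ℝ} (hA : Continuous A) (hB : Continuous B)
    (hZ : MemLp Z 2 intervalMeasure) (ha : MemLp a 2 intervalMeasure)
    (hb : MemLp b 2 intervalMeasure)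
    (hw : ∀ ℓ, FiniteEnergy A B ℓ →
        (∫ r, b r * (B r * deriv ℓ r) ∂intervalMeasure) +
          (∫ r, a r * (A r * ℓ r) ∂intervalMeasure) =
            ∫ r, Z r * (A r * ℓ r) ∂intervalMeasure) :
    ∀ᵐ r ∂intervalMeasure, B r * b r = ∫ t in r..1, A t * (Z t - a t) := by
  have hf : Integrable (fun t => A t * (Z t - a t)) intervalMeasure :=
    (hA.memLp_interval 2).integrable_mul (hZ.sub ha)
  have hBb : Integrable (fun t => B t * b t) intervalMeasure :=
    (hB.memLp_interval 2).integrable_mul hb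
  have hF : ContinuousOn (fun r => ∫ t in r..1, A t * (Z t - a t)) (Icc (-1) 1) := by
    have h := intervalIntegral.continuousOn_primitive_interval'
      (integrable_interval_iff.1 hf) (a := 1) (by simp)
    rw [uIcc_of_le (by norm_num)] at h
    refine h.neg.congr fun r _ => ?_
    exact intervalIntegral.integral_symm _ _
  have hFi : Integrable (fun r => ∫ t in r..1, A t * (Z t - a t)) intervalMeasure :=
    (hF.integrableOn_compact isCompact_Icc).mono_set Ioo_subset_Icc_self
  have hdiff := hBb.sub hFi
  have key := isOpen_Ioo.ae_eq_zero_of_integral_contDiff_smul_eq_zero (U := Ioo (-1 : ℝ) 1)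
    (μ := volume) (f := fun r => B r * b r - ∫ t in r..1, A t * (Z t - a t))
    (IntegrableOn.locallyIntegrableOn hdiff) ?_
  · rw [ae_restrict_iff' measurableSet_Ioo]
    filter_upwards [key] with r hr hmem
    exact sub_eq_zero.1 (hr hmem)
  -- The test function is the primitive of `ψ` vanishing at `-1`.
  intro ψ hψ _ hsupp
  have hψc : Continuous ψ := hψ.continuous
  have hder : ∀ r, HasDerivAt (fun r => ∫ s in (-1 : ℝ)..r, ψ s) (ψ r) r := fun r =>
    intervalIntegral.integral_hasDerivAt_right (hψc.intervalIntegrable _ _)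
      (hψc.stronglyMeasurableAtFilter _ _) hψc.continuousAt
  have hℓc : Continuous (fun r => ∫ s in (-1 : ℝ)..r, ψ s) :=
    continuous_iff_continuousAt.2 fun r => (hder r).continuousAt
  have hdeq : ∀ r, deriv (fun r => ∫ s in (-1 : ℝ)..r, ψ s) r = ψ r := fun r => (hder r).deriv
  have hfe : FiniteEnergy A B (fun r => ∫ s in (-1 : ℝ)..r, ψ s) :=
    ⟨fun r _ => (hder r).differentiableAt, (hA.mul hℓc).memLp_interval 2, by
      simp only [hdeq]; exact (hB.mul hψc).memLp_interval 2⟩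
  have h := hw _ hfe
  simp only [hdeq] at h
  have hAl : MemLp (fun r => A r * ∫ s in (-1 : ℝ)..r, ψ s) 2 intervalMeasure :=
    (hA.mul hℓc).memLp_interval 2
  have i1 := integrable_mul_of_memLp ha hAl
  have i2 := integrable_mul_of_memLp hZ hAl
  have h2 := integral_mul_primitive hf hψc
  have h3 : ∫ r, A r * (Z r - a r) * (∫ s in (-1 : ℝ)..r, ψ s) ∂intervalMeasure =
      ∫ r, b r * (B r * ψ r) ∂intervalMeasure := by
    rw [← eq_sub_iff_add_eq, ← integral_sub i2 i1] at h
    rw [h]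
    congr 1 with r
    ring
  rw [h2] at h3
  have hψb : MemLp ψ ⊤ intervalMeasure := hψc.memLp_interval ⊤
  have j1 : Integrable (fun r => ψ r * (B r * b r)) intervalMeasure := hBb.mul_of_top_right hψb
  have j2 : Integrable (fun r => ψ r * ∫ t in r..1, A t * (Z t - a t)) intervalMeasure :=
    hFi.mul_of_top_right hψb
  rw [← setIntegral_eq_integral_of_forall_compl_eq_zero (s := Ioo (-1 : ℝ) 1)]
  · change ∫ r, ψ r • (B r * b r - ∫ t in r..1, A t * (Z t - a t)) ∂intervalMeasure = 0
    simp only [smul_eq_mul]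
    simp_rw [mul_sub (ψ _)]
    rw [integral_sub j1 j2, sub_eq_zero]
    simp only [mul_comm (ψ _)]
    rw [h3]
    congr 1 with r
    ring
  · intro r hr
    rw [image_eq_zero_of_notMem_tsupport fun h => hr (hsupp h), zero_smul]

/-- An increment of `ℓ` is a continuous linear functional of `Bℓ'` in `L²`: the inner product with
`B⁻¹` cut off to a compact subinterval. -/
lemma FiniteEnergy.sub_eq_integral {A B ℓ : ℝ → ℝ} (hB : Continuous B)
    (hBpos : ∀ r ∈ Ioo (-1 : ℝ) 1, 0 < B r) (hℓ : FiniteEnergy A B ℓ) {s r : ℝ}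
    (hs : -1 < s) (hsr : s ≤ r) (hr : r < 1) :
    MemLp (fun t => (Icc s r).indicator (fun t => (B t)⁻¹) t) 2 intervalMeasure ∧
    ℓ r - ℓ s = ∫ t, (Icc s r).indicator (fun t => (B t)⁻¹) t * (B t * deriv ℓ t)
      ∂intervalMeasure := by
  have hsub : Icc s r ⊆ Ioo (-1) 1 := fun t ht => ⟨hs.trans_le ht.1, ht.2.trans_lt hr⟩
  have hc : ContinuousOn (fun t => (B t)⁻¹) (Icc s r) :=
    hB.continuousOn.inv₀ fun t ht => (hBpos t (hsub ht)).ne'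
  obtain ⟨C, hC⟩ := isCompact_Icc.exists_bound_of_continuousOn hc
  have hm : MemLp (fun t => (Icc s r).indicator (fun t => (B t)⁻¹) t) 2 intervalMeasure := by
    refine MemLp.of_bound (hB.measurable.inv.indicator measurableSet_Icc).aestronglyMeasurable
      (max C 0) (.of_forall fun t => ?_)
    by_cases ht : t ∈ Icc s r
    · rw [indicator_of_mem ht]; exact (hC t ht).trans (le_max_left _ _)
    · rw [indicator_of_notMem ht]; simp
  refine ⟨hm, ?_⟩
  have hi := hm.integrable_mul hℓ.memB
  have heq : (fun t => (Icc s r).indicator (fun t => (B t)⁻¹) t * (B t * deriv ℓ t))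
      = (Icc s r).indicator (deriv ℓ) := by
    funext t
    by_cases ht : t ∈ Icc s r
    · have := (hBpos t (hsub ht)).ne'
      simp only [indicator_of_mem ht]; field_simp
    · simp [indicator_of_notMem ht]
  change Integrable (fun t => (Icc s r).indicator (fun t => (B t)⁻¹) t * (B t * deriv ℓ t)) _ at hi
  rw [heq] at hi ⊢
  rw [integrable_indicator_iff measurableSet_Icc, IntegrableOn,
    Measure.restrict_restrict measurableSet_Icc, inter_eq_left.2 hsub] at hi
  rw [integral_indicator measurableSet_Icc, Measure.restrict_restrict measurableSet_Icc,
    inter_eq_left.2 hsub, integral_Icc_eq_integral_Ioc, ← intervalIntegral.integral_of_le hsr,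
    intervalIntegral.integral_deriv_eq_sub]
  · intro t ht
    rw [uIcc_of_le hsr] at ht
    exact hℓ.diff t (hsub ht)
  · rw [intervalIntegrable_iff_integrableOn_Icc_of_le hsr]
    exact hi

/-- In the closed energy space, `a / A` is still a primitive of `b / B`, up to null sets. -/
lemma exists_primitive {A B : ℝ → ℝ} (hB : Continuous B)
    (hApos : ∀ r ∈ Ioo (-1 : ℝ) 1, 0 < A r) (hBpos : ∀ r ∈ Ioo (-1 : ℝ) 1, 0 < B r)
    {x : WithLp 2 (Lp ℝ 2 intervalMeasure × Lp ℝ 2 intervalMeasure)}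
    (hx : x ∈ (energySubspace A B).topologicalClosure) :
    ∃ c, ∃ s ∈ Ioo (-1 : ℝ) 1, ∀ᵐ r ∂intervalMeasure,
      x.fst r / A r = c + ∫ t in s..r, x.snd t / B t := by
  obtain ⟨y, hy, hyx⟩ := mem_closure_iff_seq_limit.1 hx
  choose ℓ hℓ h1 h2 using hy
  have hfst : Tendsto (fun n => (y n).fst) atTop (𝓝 x.fst) :=
    ((WithLp.continuous_fst 2 _ _).tendsto x).comp hyx
  have hsnd : Tendsto (fun n => (y n).snd) atTop (𝓝 x.snd) :=
    ((WithLp.continuous_snd 2 _ _).tendsto x).comp hyx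
  obtain ⟨φ, hφ, hae⟩ := (tendstoInMeasure_of_tendsto_Lp hfst).exists_seq_tendsto_ae
  have hpt : ∀ᵐ r ∂intervalMeasure, r ∈ Ioo (-1 : ℝ) 1 ∧
      Tendsto (fun n => ℓ (φ n) r) atTop (𝓝 (x.fst r / A r)) := by
    filter_upwards [hae, ae_all_iff.2 h1, ae_restrict_mem measurableSet_Ioo] with r h h' hr
    refine ⟨hr, (h.div_const (A r)).congr fun n => ?_⟩
    rw [h' (φ n), mul_div_cancel_left₀ _ (hApos r hr).ne']
  have hinc : ∀ s r, -1 < s → s ≤ r → r < 1 →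
      Tendsto (fun n => ℓ (φ n) r - ℓ (φ n) s) atTop (𝓝 (∫ t in s..r, x.snd t / B t)) := by
    intro s r hs hsr hr
    have hm := ((hℓ 0).sub_eq_integral hB hBpos hs hsr hr).1
    have hlim : Tendsto (fun n => inner ℝ hm.toLp (y (φ n)).snd) atTop
        (𝓝 (inner ℝ hm.toLp x.snd)) := tendsto_const_nhds.inner (hsnd.comp hφ.tendsto_atTop)
    have e : inner ℝ hm.toLp x.snd = ∫ t in s..r, x.snd t / B t := by
      have hsub : Icc s r ⊆ Ioo (-1) 1 := fun t ht => ⟨hs.trans_le ht.1, ht.2.trans_lt hr⟩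
      rw [inner_eq_integral _ _ hm.coeFn_toLp (ae_eq_refl _),
        intervalIntegral.integral_of_le hsr, ← integral_Icc_eq_integral_Ioc]
      simp_rw [← indicator_mul_left]
      rw [integral_indicator measurableSet_Icc, Measure.restrict_restrict measurableSet_Icc,
        inter_eq_left.2 hsub]
      simp_rw [div_eq_inv_mul]
    rw [← e]
    refine hlim.congr fun n => ?_
    rw [inner_eq_integral _ _ hm.coeFn_toLp (h2 (φ n)),
      ((hℓ (φ n)).sub_eq_integral hB hBpos hs hsr hr).2]
  have : NeBot (ae intervalMeasure) := by
    rw [ae_neBot, Ne, Measure.restrict_eq_zero, Real.volume_Ioo]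
    norm_num
  obtain ⟨s, hs, hlims⟩ := hpt.exists
  refine ⟨x.fst s / A s, s, hs, ?_⟩
  filter_upwards [hpt] with r ⟨hr, hlimr⟩
  rcases le_total s r with hsr | hrs
  · have := tendsto_nhds_unique (hinc s r hs.1 hsr hr.2) (hlimr.sub hlims)
    linarith
  · have := tendsto_nhds_unique (hinc r s hr.1 hrs hs.2) (hlims.sub hlimr)
    rw [intervalIntegral.integral_symm]
    linarith

/-- Existence: the generalized solution has a differentiable representative. -/
theorem exists_solution {A B Z : ℝ → ℝ} (hA : Continuous A) (hB : Continuous B)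
    (hZ : MemLp Z 2 intervalMeasure)
    (hApos : ∀ r ∈ Ioo (-1 : ℝ) 1, 0 < A r) (hBpos : ∀ r ∈ Ioo (-1 : ℝ) 1, 0 < B r) :
    ∃ h, FiniteEnergy A B h ∧ ∀ ℓ, FiniteEnergy A B ℓ →
      (∫ r, B r * deriv h r * (B r * deriv ℓ r) ∂intervalMeasure) +
        (∫ r, A r * h r * (A r * ℓ r) ∂intervalMeasure) =
          ∫ r, Z r * (A r * ℓ r) ∂intervalMeasure := by
  obtain ⟨x, hx, hw⟩ := exists_weak A B Z hZ
  have ha : MemLp x.fst 2 intervalMeasure := Lp.memLp _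
  have hb : MemLp x.snd 2 intervalMeasure := Lp.memLp _
  have hflux := flux_eq hA hB hZ ha hb hw
  obtain ⟨c, s, hs, hprim⟩ := exists_primitive hB hApos hBpos hx
  set F : ℝ → ℝ := fun r => ∫ t in r..1, A t * (Z t - x.fst t) with hFdef
  have hF : ContinuousOn F (Icc (-1) 1) := by
    have h := intervalIntegral.continuousOn_primitive_interval'
      (integrable_interval_iff.1 ((hA.memLp_interval 2).integrable_mul (hZ.sub ha)))
      (a := 1) (by simp)
    rw [uIcc_of_le (by norm_num)] at h
    exact h.neg.congr fun r _ => intervalIntegral.integral_symm _ _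
  -- `F = B² h'` for the solution `h`, so `F / B / B` is the continuous candidate for `h'`.
  have hG : ContinuousOn (fun r => F r / B r / B r) (Ioo (-1) 1) :=
    ((hF.mono Ioo_subset_Icc_self).div hB.continuousOn fun r hr => (hBpos r hr).ne').div
      hB.continuousOn fun r hr => (hBpos r hr).ne'
  have hder : ∀ r ∈ Ioo (-1 : ℝ) 1,
      HasDerivAt (fun r => c + ∫ t in s..r, F t / B t / B t) (F r / B r / B r) r := by
    intro r hr
    refine HasDerivAt.const_add c (intervalIntegral.integral_hasDerivAt_right ?_ ?_ ?_)
    · exact (hG.mono (ordConnected_Ioo.uIcc_subset hs hr)).intervalIntegrable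
    · exact hG.stronglyMeasurableAtFilter isOpen_Ioo r hr
    · exact hG.continuousAt (isOpen_Ioo.mem_nhds hr)
  have e2 : x.snd =ᵐ[intervalMeasure]
      fun r => B r * deriv (fun r => c + ∫ t in s..r, F t / B t / B t) r := by
    filter_upwards [hflux, ae_restrict_mem measurableSet_Ioo] with r h hr
    have hB0 := (hBpos r hr).ne'
    rw [(hder r hr).deriv, mul_div_cancel₀ _ hB0, eq_div_iff hB0, mul_comm, h]
  have e1 : x.fst =ᵐ[intervalMeasure] fun r => A r * (c + ∫ t in s..r, F t / B t / B t) := by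
    filter_upwards [hprim, ae_restrict_mem measurableSet_Ioo] with r h hr
    have hA0 := (hApos r hr).ne'
    have : ∫ t in s..r, F t / B t / B t = ∫ t in s..r, x.snd t / B t := by
      apply intervalIntegral.integral_congr_ae
      have := (ae_restrict_iff' measurableSet_Ioo).1 hflux
      filter_upwards [this] with t ht ht'
      have htI := ordConnected_Ioo.uIcc_subset hs hr (uIoc_subset_uIcc ht')
      have hB0 := (hBpos t htI).ne'
      simp only [hFdef, ← ht htI, mul_div_cancel_left₀ _ hB0]
    rw [this, ← h, mul_div_cancel₀ _ hA0]
  refine ⟨_, ⟨fun r hr => (hder r hr).differentiableAt, ha.ae_eq e1, hb.ae_eq e2⟩,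
    fun ℓ hℓ => ?_⟩
  rw [← hw ℓ hℓ]
  congr 1 <;> apply integral_congr_ae
  · filter_upwards [e2] with r hr
    rw [hr]
  · filter_upwards [e1] with r hr
    rw [hr]

theorem solution_unique {A B Z h₁ h₂ : ℝ → ℝ}
    (hApos : ∀ r ∈ Ioo (-1 : ℝ) 1, 0 < A r)
    (hf₁ : FiniteEnergy A B h₁) (hf₂ : FiniteEnergy A B h₂)
    (hw₁ : ∀ ℓ, FiniteEnergy A B ℓ →
      (∫ r, B r * deriv h₁ r * (B r * deriv ℓ r) ∂intervalMeasure) +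
        (∫ r, A r * h₁ r * (A r * ℓ r) ∂intervalMeasure) =
          ∫ r, Z r * (A r * ℓ r) ∂intervalMeasure)
    (hw₂ : ∀ ℓ, FiniteEnergy A B ℓ →
      (∫ r, B r * deriv h₂ r * (B r * deriv ℓ r) ∂intervalMeasure) +
        (∫ r, A r * h₂ r * (A r * ℓ r) ∂intervalMeasure) =
          ∫ r, Z r * (A r * ℓ r) ∂intervalMeasure) :
    EqOn h₂ h₁ (Ioo (-1 : ℝ) 1) := by
  have hd : (fun r => B r * deriv (h₂ - h₁) r) =ᵐ[intervalMeasure]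
      fun r => B r * deriv h₂ r - B r * deriv h₁ r := by
    filter_upwards [ae_restrict_mem measurableSet_Ioo] with r hr
    rw [deriv_sub (hf₂.diff r hr) (hf₁.diff r hr)]; ring
  have hd0 : ∀ r, A r * (h₂ - h₁) r = A r * h₂ r - A r * h₁ r := fun r => by
    simp [mul_sub]
  have hg : FiniteEnergy A B (h₂ - h₁) :=
    ⟨fun r hr => (hf₂.diff r hr).sub (hf₁.diff r hr),
      (hf₂.memA.sub hf₁.memA).ae_eq (.of_forall fun r => (hd0 r).symm),
      (hf₂.memB.sub hf₁.memB).ae_eq hd.symm⟩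
  have e1 : ∫ r, (B r * deriv (h₂ - h₁) r) ^ 2 ∂intervalMeasure =
      (∫ r, B r * deriv h₂ r * (B r * deriv (h₂ - h₁) r) ∂intervalMeasure) -
      ∫ r, B r * deriv h₁ r * (B r * deriv (h₂ - h₁) r) ∂intervalMeasure := by
    rw [← integral_sub (integrable_mul_of_memLp hf₂.memB hg.memB)
      (integrable_mul_of_memLp hf₁.memB hg.memB)]
    apply integral_congr_ae
    filter_upwards [hd] with r hr
    simp only [hr]; ring
  have e2 : ∫ r, (A r * (h₂ - h₁) r) ^ 2 ∂intervalMeasure =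
      (∫ r, A r * h₂ r * (A r * (h₂ - h₁) r) ∂intervalMeasure) -
      ∫ r, A r * h₁ r * (A r * (h₂ - h₁) r) ∂intervalMeasure := by
    rw [← integral_sub (integrable_mul_of_memLp hf₂.memA hg.memA)
      (integrable_mul_of_memLp hf₁.memA hg.memA)]
    congr 1 with r
    simp only [hd0]; ring
  have hB0 : 0 ≤ ∫ r, (B r * deriv (h₂ - h₁) r) ^ 2 ∂intervalMeasure :=
    integral_nonneg fun r => sq_nonneg _
  have hA0 : 0 ≤ ∫ r, (A r * (h₂ - h₁) r) ^ 2 ∂intervalMeasure :=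
    integral_nonneg fun r => sq_nonneg _
  have h0 : ∫ r, (A r * (h₂ - h₁) r) ^ 2 ∂intervalMeasure = 0 := by
    linarith [hw₁ _ hg, hw₂ _ hg]
  rw [integral_eq_zero_iff_of_nonneg (fun r => sq_nonneg _) hg.memA.integrable_sq] at h0
  refine Measure.eqOn_open_of_ae_eq (μ := volume) ?_ isOpen_Ioo
    (fun r hr => (hf₂.diff r hr).continuousAt.continuousWithinAt)
    (fun r hr => (hf₁.diff r hr).continuousAt.continuousWithinAt)
  filter_upwards [h0, ae_restrict_mem measurableSet_Ioo] with r h hr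
  have := (hApos r hr).ne'
  simp [this] at h
  linarith

end

/-! ### The weights of the collision invariant equation -/

/-- A positive continuous factor `σ` does not change the weighted `L²` space of weight `w`. -/
lemma memLp_weight_iff {w σ u : ℝ → ℝ} (hw : Continuous w) (hσ : Continuous σ)
    (hw0 : ∀ r ∈ Ioo (-1 : ℝ) 1, 0 < w r) (hσ0 : ∀ r, 0 < σ r)
    (hu : AEStronglyMeasurable u intervalMeasure) :
    MemLp (fun r => √(w r * σ r) * u r) 2 intervalMeasure ↔
      IntegrableOn (fun r => w r * u r ^ 2) (Ioo (-1 : ℝ) 1) := by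
  have hm : AEStronglyMeasurable (fun r => √(w r * σ r) * u r) intervalMeasure :=
    (hw.mul hσ).sqrt.aestronglyMeasurable.mul hu
  rw [memLp_two_iff_integrable_sq hm]
  have hsq : (fun r => (√(w r * σ r) * u r) ^ 2) =ᵐ[intervalMeasure]
      fun r => σ r * (w r * u r ^ 2) := by
    filter_upwards [ae_restrict_mem measurableSet_Ioo] with r hr
    rw [mul_pow, Real.sq_sqrt (mul_nonneg (hw0 r hr).le (hσ0 r).le)]
    ring
  rw [integrable_congr hsq]
  constructor
  · intro h
    have hinv : Continuous fun r => (σ r)⁻¹ := hσ.inv₀ fun r => (hσ0 r).ne'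
    refine (h.mul_of_top_right (hinv.memLp_interval ⊤)).congr (.of_forall fun r => ?_)
    simp [inv_mul_cancel_left₀ (hσ0 r).ne']
  · intro h
    exact Integrable.mul_of_top_right h (hσ.memLp_interval ⊤)

/-- Square root of the weight of `h ℓ`. The real powers are only used on `(-1,1)`, where their base
is positive; for `2 ≤ d` the exponent is positive, so the function is continuous on `ℝ`. -/
noncomputable def gciA (d : ℕ) (κ r : ℝ) : ℝ :=
  √((1 - r ^ 2) ^ (((d : ℝ) - 1) / 2) * ((κ * r ^ 2 + ((d : ℝ) - 1)) * Real.exp (κ * r ^ 2 / 2)))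

/-- Square root of the weight of `h' ℓ'`. -/
noncomputable def gciB (d : ℕ) (κ r : ℝ) : ℝ :=
  √((1 - r ^ 2) ^ (((d : ℝ) + 1) / 2) * Real.exp (κ * r ^ 2 / 2))

/-- On `(-1,1)`, `Z A` is the right-hand side `-r (1-r²)^{(d-1)/2} e^{κr²/2}`. -/
noncomputable def gciZ (d : ℕ) (κ r : ℝ) : ℝ :=
  -(r / (κ * r ^ 2 + ((d : ℝ) - 1)) * gciA d κ r)

section
variable {d : ℕ} {κ : ℝ}

lemma one_sub_sq_pos {r : ℝ} (hr : r ∈ Ioo (-1 : ℝ) 1) : 0 < 1 - r ^ 2 := by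
  nlinarith [hr.1, hr.2]

lemma gci_coeff_pos (hd : 2 ≤ d) (hκ : 0 < κ) (r : ℝ) : 0 < κ * r ^ 2 + ((d : ℝ) - 1) := by
  have : (2 : ℝ) ≤ d := by exact_mod_cast hd
  have := mul_nonneg hκ.le (sq_nonneg r)
  linarith

lemma continuous_one_sub_sq_rpow {p : ℝ} (hp : 0 ≤ p) : Continuous fun r : ℝ => (1 - r ^ 2) ^ p :=
  (by fun_prop : Continuous fun r : ℝ => 1 - r ^ 2).rpow_const fun _ => Or.inr hp

lemma continuous_weight (hd : 2 ≤ d) :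
    Continuous fun r : ℝ => (1 - r ^ 2) ^ (((d : ℝ) - 1) / 2) := by
  have : (2 : ℝ) ≤ d := by exact_mod_cast hd
  exact continuous_one_sub_sq_rpow (by linarith)

lemma continuous_weight' (d : ℕ) :
    Continuous fun r : ℝ => (1 - r ^ 2) ^ (((d : ℝ) + 1) / 2) :=
  continuous_one_sub_sq_rpow (by positivity)

lemma continuous_gciA (hd : 2 ≤ d) : Continuous (gciA d κ) :=
  ((continuous_weight hd).mul (by fun_prop)).sqrt

lemma continuous_gciB : Continuous (gciB d κ) :=
  ((continuous_weight' d).mul (by fun_prop)).sqrt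

lemma continuous_gciZ (hd : 2 ≤ d) (hκ : 0 < κ) : Continuous (gciZ d κ) :=
  ((continuous_id.div (by fun_prop) fun r => (gci_coeff_pos hd hκ r).ne').mul
    (continuous_gciA hd)).neg

lemma gciA_arg_pos (hd : 2 ≤ d) (hκ : 0 < κ) {r : ℝ} (hr : r ∈ Ioo (-1 : ℝ) 1) :
    0 < (1 - r ^ 2) ^ (((d : ℝ) - 1) / 2) *
      ((κ * r ^ 2 + ((d : ℝ) - 1)) * Real.exp (κ * r ^ 2 / 2)) :=
  mul_pos (Real.rpow_pos_of_pos (one_sub_sq_pos hr) _)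
    (mul_pos (gci_coeff_pos hd hκ r) (Real.exp_pos _))

lemma gciB_arg_pos {r : ℝ} (hr : r ∈ Ioo (-1 : ℝ) 1) :
    0 < (1 - r ^ 2) ^ (((d : ℝ) + 1) / 2) * Real.exp (κ * r ^ 2 / 2) :=
  mul_pos (Real.rpow_pos_of_pos (one_sub_sq_pos hr) _) (Real.exp_pos _)

lemma finiteEnergy_gci_iff (hd : 2 ≤ d) (hκ : 0 < κ) (ℓ : ℝ → ℝ) :
    FiniteEnergy (gciA d κ) (gciB d κ) ℓ ↔
      (∀ r ∈ Ioo (-1 : ℝ) 1, DifferentiableAt ℝ ℓ r) ∧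
      IntegrableOn (fun r : ℝ => (1 - r ^ 2) ^ (((d : ℝ) - 1) / 2) * ℓ r ^ 2) (Ioo (-1 : ℝ) 1) ∧
      IntegrableOn (fun r : ℝ => (1 - r ^ 2) ^ (((d : ℝ) + 1) / 2) * deriv ℓ r ^ 2)
        (Ioo (-1 : ℝ) 1) := by
  have hB := memLp_weight_iff (u := deriv ℓ) (continuous_weight' d)
    (by fun_prop : Continuous fun r : ℝ => Real.exp (κ * r ^ 2 / 2))
    (fun r hr => Real.rpow_pos_of_pos (one_sub_sq_pos hr) _) (fun r => Real.exp_pos _)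
    (measurable_deriv ℓ).aestronglyMeasurable
  have hA : (∀ r ∈ Ioo (-1 : ℝ) 1, DifferentiableAt ℝ ℓ r) → _ := fun hℓ =>
    memLp_weight_iff (u := ℓ) (continuous_weight hd)
    (by fun_prop : Continuous fun r : ℝ =>
      (κ * r ^ 2 + ((d : ℝ) - 1)) * Real.exp (κ * r ^ 2 / 2))
    (fun r hr => Real.rpow_pos_of_pos (one_sub_sq_pos hr) _)
    (fun r => mul_pos (gci_coeff_pos hd hκ r) (Real.exp_pos _))
    (ContinuousOn.aestronglyMeasurable
      (fun r hr => (hℓ r hr).continuousAt.continuousWithinAt) measurableSet_Ioo)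
  exact ⟨fun h => ⟨h.diff, (hA h.diff).1 h.memA, hB.1 h.memB⟩,
    fun h => ⟨h.1, (hA h.1).2 h.2.1, hB.2 h.2.2⟩⟩

lemma isGCIProfile_iff (hd : 2 ≤ d) (hκ : 0 < κ) (h : ℝ → ℝ) :
    IsGCIProfile d κ h ↔ FiniteEnergy (gciA d κ) (gciB d κ) h ∧
      ∀ ℓ, FiniteEnergy (gciA d κ) (gciB d κ) ℓ →
        (∫ r, gciB d κ r * deriv h r * (gciB d κ r * deriv ℓ r) ∂intervalMeasure) +
          (∫ r, gciA d κ r * h r * (gciA d κ r * ℓ r) ∂intervalMeasure) =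
            ∫ r, gciZ d κ r * (gciA d κ r * ℓ r) ∂intervalMeasure := by
  have e1 : ∀ ℓ : ℝ → ℝ,
      ∫ r, gciB d κ r * deriv h r * (gciB d κ r * deriv ℓ r) ∂intervalMeasure =
      ∫ r in Ioo (-1 : ℝ) 1,
        (1 - r ^ 2) ^ (((d : ℝ) + 1) / 2) * Real.exp (κ * r ^ 2 / 2) * deriv h r * deriv ℓ r := by
    intro ℓ
    refine setIntegral_congr_fun measurableSet_Ioo fun r hr => ?_
    have : gciB d κ r ^ 2 = _ := Real.sq_sqrt (gciB_arg_pos hr).le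
    rw [← this]; ring
  have e2 : ∀ ℓ : ℝ → ℝ,
      ∫ r, gciA d κ r * h r * (gciA d κ r * ℓ r) ∂intervalMeasure =
      ∫ r in Ioo (-1 : ℝ) 1,
        (1 - r ^ 2) ^ (((d : ℝ) - 1) / 2) * (κ * r ^ 2 + ((d : ℝ) - 1)) *
          Real.exp (κ * r ^ 2 / 2) * h r * ℓ r := by
    intro ℓ
    refine setIntegral_congr_fun measurableSet_Ioo fun r hr => ?_
    have : gciA d κ r ^ 2 = _ := Real.sq_sqrt (gciA_arg_pos hd hκ hr).le
    rw [mul_assoc (_ ^ _) (_ + _) (Real.exp _), ← this]; ring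
  have e3 : ∀ ℓ : ℝ → ℝ,
      ∫ r, gciZ d κ r * (gciA d κ r * ℓ r) ∂intervalMeasure =
      - ∫ r in Ioo (-1 : ℝ) 1,
          r * (1 - r ^ 2) ^ (((d : ℝ) - 1) / 2) * Real.exp (κ * r ^ 2 / 2) * ℓ r := by
    intro ℓ
    rw [← integral_neg]
    refine setIntegral_congr_fun measurableSet_Ioo fun r hr => ?_
    have h1 : gciA d κ r ^ 2 = _ := Real.sq_sqrt (gciA_arg_pos hd hκ hr).le
    have h2 := (gci_coeff_pos hd hκ r).ne'
    calc gciZ d κ r * (gciA d κ r * ℓ r)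
        = -(r / (κ * r ^ 2 + ((d : ℝ) - 1)) * gciA d κ r ^ 2 * ℓ r) := by
          rw [gciZ]; ring
      _ = _ := by
          rw [h1]
          generalize κ * r ^ 2 + ((d : ℝ) - 1) = m at h2
          field_simp
  simp only [IsGCIProfile, finiteEnergy_gci_iff hd hκ, e1, e2, e3, and_imp, and_assoc]

end

/-- existence and uniqueness (as functions on `(−1,1)`) of the generalized
collision invariant profile `h`. -/
theorem stmt9 (d : ℕ) (hd : 2 ≤ d) (κ : ℝ) (hκ : 0 < κ) :
    ∃ h : ℝ → ℝ, IsGCIProfile d κ h ∧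
      ∀ h₂ : ℝ → ℝ, IsGCIProfile d κ h₂ → EqOn h₂ h (Ioo (-1 : ℝ) 1) := by
  have hA := fun r (hr : r ∈ Ioo (-1 : ℝ) 1) => Real.sqrt_pos.2 (gciA_arg_pos hd hκ hr)
  have hB := fun r (hr : r ∈ Ioo (-1 : ℝ) 1) => Real.sqrt_pos.2 (gciB_arg_pos (d := d) (κ := κ) hr)
  obtain ⟨h, hf, hw⟩ := exists_solution (continuous_gciA hd) continuous_gciB
    ((continuous_gciZ hd hκ).memLp_interval 2) hA hB
  refine ⟨h, (isGCIProfile_iff hd hκ h).2 ⟨hf, hw⟩, fun h₂ hh₂ => ?_⟩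
  obtain ⟨hf₂, hw₂⟩ := (isGCIProfile_iff hd hκ h₂).1 hh₂
  exact solution_unique hA hf hf₂ hw hw₂
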